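/- Let A, B, C be a nondegenerate triangle in the Euclidean plane with side lengths a = dist B C, b = dist C A, c = dist A B, mittenpunkt Mi (barycentric combination of A, B, C with weights (a(b+c−a), b(c+a−b), c(a+b−c))), and medial triangle vertices M₁ = midpoint(B,C), M₂ = midpoint(C,A), M₃ = midpoint(A,B). Then the Gergonne point of the medial triangle — the barycentric combination of M₁, M₂, M₃ with weights ((c+a−b)(a+b−c), (a+b−c)(b+c−a), (b+c−a)(c+a−b)) — equals the mittenpunkt Mi of triangle ABC. -/

import Mathlib

open EuclideanGeometry RealInnerProductSpace

/-- The barycentric combination of three points with weights `u, v, w`. -/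
noncomputable def bary (P Q R : EuclideanSpace ℝ (Fin 2)) (u v w : ℝ) :
    EuclideanSpace ℝ (Fin 2) :=
  (u / (u + v + w)) • P + (v / (u + v + w)) • Q + (w / (u + v + w)) • R

/-- Evaluation of a two-variable real polynomial at a point of the plane. -/
noncomputable def mvEval (f : MvPolynomial (Fin 2) ℝ)
    (p : EuclideanSpace ℝ (Fin 2)) : ℝ :=
  MvPolynomial.eval (fun i => p i) f

/-!
A point `X` has barycentric coordinates `(u : v : w)` with respect to `A, B, C` when
`u • (A - X) + v • (B - X) + w • (C - X) = 0`, a condition linear in the vertices. Putting the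
midpoints of the sides in place of the vertices therefore replaces the coordinates by
`(v + w : w + u : u + v)`. With `x = b + c - a`, `y = c + a - b`, `z = a + b - c`, the Gergonne
coordinates `(y * z : z * x : x * y)` of the medial triangle become `(x * (y + z) : …)`, and
`y + z = 2 * a`, so these are the mittenpunkt coordinates up to a factor `2`.
-/

theorem mul_add_mul_add_mul_pos {R : Type*} [CommSemiring R] [PartialOrder R]
    [IsStrictOrderedRing R] {x y z : R} (hx : 0 ≤ x) (hy : 0 ≤ y) (hz : 0 ≤ z) (hxy : 0 < x + y)
    (hyz : 0 < y + z) (hzx : 0 < z + x) : 0 < y * z + z * x + x * y := by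
  rcases hx.eq_or_lt with rfl | hx_pos
  · simpa using mul_pos (by simpa using hxy) (by simpa using hzx)
  · calc
      0 < x * (y + z) := mul_pos hx_pos hyz
      _ ≤ x * (y + z) + y * z := le_add_of_nonneg_right (mul_nonneg hy hz)
      _ = y * z + z * x + x * y := by ring

theorem gergonne_weights_sum_pos {E : Type*} [MetricSpace E] {A B C : E} {a b c : ℝ}
    (ha : a = dist B C) (hb : b = dist C A) (hc : c = dist A B)
    (hBC : B ≠ C) (hCA : C ≠ A) (hAB : A ≠ B) :
    0 < (c + a - b) * (a + b - c) + (a + b - c) * (b + c - a) + (b + c - a) * (c + a - b) := by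
  have a_pos : 0 < a := ha ▸ dist_pos.2 hBC
  have b_pos : 0 < b := hb ▸ dist_pos.2 hCA
  have c_pos : 0 < c := hc ▸ dist_pos.2 hAB
  have a_le : a ≤ b + c := by
    simpa only [ha, hb, hc, dist_comm, add_comm] using dist_triangle B A C
  have b_le : b ≤ c + a := by
    simpa only [ha, hb, hc, dist_comm, add_comm] using dist_triangle C B A
  have c_le : c ≤ a + b := by
    simpa only [ha, hb, hc, dist_comm, add_comm] using dist_triangle A C B
  apply mul_add_mul_add_mul_pos <;> linarith

/-- `X` has homogeneous barycentric coordinates `(u : v : w)` with respect to `A, B, C`.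
The equation involves no division; it determines `X` as soon as `u + v + w` is invertible. -/
def IsBarycenter {R V P : Type*} [Ring R] [AddCommGroup V] [Module R V] [AddTorsor V P]
    (A B C : P) (u v w : R) (X : P) : Prop :=
  u • (A -ᵥ X) + v • (B -ᵥ X) + w • (C -ᵥ X) = 0

theorem isBarycenter_iff_bary_eq {P Q R X : EuclideanSpace ℝ (Fin 2)} {u v w : ℝ}
    (h : u + v + w ≠ 0) : IsBarycenter P Q R u v w X ↔ bary P Q R u v w = X := by
  have bary_eq : bary P Q R u v w = (u + v + w)⁻¹ • (u • P + v • Q + w • R) := by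
    simp only [bary, div_eq_inv_mul, mul_smul, smul_add]
  have vsub_eq : u • (P -ᵥ X) + v • (Q -ᵥ X) + w • (R -ᵥ X) =
      u • P + v • Q + w • R - (u + v + w) • X := by
    simp only [vsub_eq_sub]
    module
  rw [IsBarycenter, vsub_eq, sub_eq_zero, bary_eq, inv_smul_eq_iff₀ h]

theorem isBarycenter_mul_left_iff {R V P : Type*} [Ring R] [AddCommGroup V] [Module R V]
    [AddTorsor V P] {A B C X : P} {u v w k : R} (hk : IsUnit k) :
    IsBarycenter A B C (k * u) (k * v) (k * w) X ↔ IsBarycenter A B C u v w X := by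
  simp only [IsBarycenter, mul_smul, ← smul_add, hk.smul_eq_zero]

section AffineSpace

variable {R V P : Type*} [CommRing R] [AddCommGroup V] [Module R V] [AddTorsor V P]

theorem isBarycenter_midpoint_iff [Invertible (2 : R)] {A B C X : P} {u v w : R} :
    IsBarycenter (midpoint R B C) (midpoint R C A) (midpoint R A B) u v w X ↔
      IsBarycenter A B C (v + w) (w + u) (u + v) X := by
  refine Iff.trans ?_ (isBarycenter_mul_left_iff (isUnit_of_invertible (⅟2 : R)))
  simp only [IsBarycenter, midpoint_vsub]
  refine Eq.congr_left ?_
  module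

theorem stmt16_general [Invertible (2 : R)] (A B C X : P) (a b c : R) :
    IsBarycenter (midpoint R B C) (midpoint R C A) (midpoint R A B)
        ((c + a - b) * (a + b - c)) ((a + b - c) * (b + c - a)) ((b + c - a) * (c + a - b)) X ↔
      IsBarycenter A B C (a * (b + c - a)) (b * (c + a - b)) (c * (a + b - c)) X := by
  calc
    _ ↔ IsBarycenter A B C (2 * (a * (b + c - a))) (2 * (b * (c + a - b)))
          (2 * (c * (a + b - c))) X := by
      rw [isBarycenter_midpoint_iff]
      ring_nf
    _ ↔ _ := isBarycenter_mul_left_iff (isUnit_of_invertible 2)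

end AffineSpace

theorem stmt16 (A B C : EuclideanSpace ℝ (Fin 2))
    (hABC : AffineIndependent ℝ ![A, B, C])
    (a b c : ℝ) (ha : a = dist B C) (hb : b = dist C A) (hc : c = dist A B)
    (Mi M₁ M₂ M₃ : EuclideanSpace ℝ (Fin 2))
    (hMi : Mi = bary A B C (a * (b + c - a)) (b * (c + a - b)) (c * (a + b - c)))
    (hM₁ : M₁ = midpoint ℝ B C) (hM₂ : M₂ = midpoint ℝ C A)
    (hM₃ : M₃ = midpoint ℝ A B) :
    bary M₁ M₂ M₃ ((c + a - b) * (a + b - c)) ((a + b - c) * (b + c - a))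
      ((b + c - a) * (c + a - b)) = Mi := by
  have hBC : B ≠ C := hABC.injective.ne (show (1 : Fin 3) ≠ 2 by decide)
  have hCA : C ≠ A := hABC.injective.ne (show (2 : Fin 3) ≠ 0 by decide)
  have hAB : A ≠ B := hABC.injective.ne (show (0 : Fin 3) ≠ 1 by decide)
  have hG := (gergonne_weights_sum_pos ha hb hc hBC hCA hAB).ne'
  have hM : a * (b + c - a) + b * (c + a - b) + c * (a + b - c) ≠ 0 := by
    convert hG using 1
    ring
  subst hM₁ hM₂ hM₃
  rw [← isBarycenter_iff_bary_eq hG, stmt16_general, isBarycenter_iff_bary_eq hM, hMi]
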